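/- arXiv:1606.03982 — 3 statements merged into one kernel-verified Lean document; each statement's English description precedes it below -/
import Mathlib

section
/- For every complete commutative strong bimonoid 𝒜 and every 𝒜-weighted k-MCFG G there exists a non-deleting 𝒜-weighted k-MCFG G' that is equivalent to G, i.e. ⟦G'⟧ = ⟦G⟧. -/
namespace CS

/-! ### Dyck languages -/

/-- The smallest monoid congruence on `(S ⊕ S)*` (opening/closing brackets)
satisfying the cancellation `σ σ̄ ≡ ε`. -/
inductive DyckRel (S : Type) : List (S ⊕ S) → List (S ⊕ S) → Prop
  | cancel (σ : S) : DyckRel S [Sum.inl σ, Sum.inr σ] []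
  | refl (w : List (S ⊕ S)) : DyckRel S w w
  | symm {u v} : DyckRel S u v → DyckRel S v u
  | trans {u v w} : DyckRel S u v → DyckRel S v w → DyckRel S u w
  | append {u v u' v'} : DyckRel S u v → DyckRel S u' v' →
      DyckRel S (u ++ u') (v ++ v')

/-- The Dyck language `D(S) = [ε]_{≡_S}`. -/
def DyckLang (S : Type) : Set (List (S ⊕ S)) := {w | DyckRel S w []}

/-- The smallest monoid congruence on `(S ⊕ S)*` closed under the cancellation rule
of congruence multiple Dyck languages:  whenever `{σ₁, …, σ_ℓ} ∈ P`,
`u₀, …, u_ℓ, v₁, …, v_ℓ ∈ D(S)` and `v₁ ⋯ v_ℓ ≡ ε`, then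
`u₀ σ₁ v₁ σ̄₁ u₁ ⋯ σ_ℓ v_ℓ σ̄_ℓ u_ℓ ≡ u₀ u₁ ⋯ u_ℓ`.
The data of `σ₁, …, σ_ℓ`, `v₁, …, v_ℓ` and `u₁, …, u_ℓ` is given by a list
`ts` of triples `(σᵢ, vᵢ, uᵢ)`. -/
inductive MDyckRel (S : Type) (P : Set (Set S)) : List (S ⊕ S) → List (S ⊕ S) → Prop
  | refl (w : List (S ⊕ S)) : MDyckRel S P w w
  | symm {u v} : MDyckRel S P u v → MDyckRel S P v u
  | trans {u v w} : MDyckRel S P u v → MDyckRel S P v w → MDyckRel S P u w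
  | append {u v u' v'} : MDyckRel S P u v → MDyckRel S P u' v' →
      MDyckRel S P (u ++ u') (v ++ v')
  | cancel (u0 : List (S ⊕ S)) (ts : List (S × List (S ⊕ S) × List (S ⊕ S))) :
      (ts.map Prod.fst).Nodup →
      {σ | σ ∈ ts.map Prod.fst} ∈ P →
      u0 ∈ DyckLang S →
      (∀ t ∈ ts, t.2.1 ∈ DyckLang S ∧ t.2.2 ∈ DyckLang S) →
      MDyckRel S P ((ts.map (fun t => t.2.1)).flatten) [] →
      MDyckRel S P
        (u0 ++ (ts.map (fun t => Sum.inl t.1 :: t.2.1 ++ [Sum.inr t.1] ++ t.2.2)).flatten)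
        (u0 ++ (ts.map (fun t => t.2.2)).flatten)

/-- The congruence multiple Dyck language `mD_c(S, P) = [ε]_{≡_{S,P}}`. -/
def MDyckLang (S : Type) (P : Set (Set S)) : Set (List (S ⊕ S)) := {w | MDyckRel S P w []}

/-- The class of congruence multiple Dyck languages over `S` of dimension at most `k`. -/
def cmDyckClass (k : ℕ) (S : Type) : Set (Set (List (S ⊕ S))) :=
  {L | ∃ Pa : Set (Set S), Setoid.IsPartition Pa ∧ (∀ p ∈ Pa, p.ncard ≤ k) ∧
        L = MDyckLang S Pa}

/-! ### Complete commutative strong bimonoids -/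

/-- A complete commutative strong bimonoid: two commutative monoid structures
`(A, +, 0)` and `(A, ·, 1)` with `0` multiplicatively absorbing, together with an
infinitary sum operation satisfying the axioms of Droste and Vogler. -/
class CCSBimonoid (A : Type) extends AddCommMonoid A, CommMonoid A where
  zero_mul' : ∀ a : A, 0 * a = 0
  mul_zero' : ∀ a : A, a * 0 = 0
  bigSum : {I : Type} → Set I → (I → A) → A
  bigSum_empty : ∀ {I : Type} (f : I → A), bigSum (∅ : Set I) f = 0
  bigSum_singleton : ∀ {I : Type} (j : I) (f : I → A), bigSum {j} f = f j
  bigSum_pair : ∀ {I : Type} (j k : I) (f : I → A), j ≠ k →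
      bigSum {j, k} f = f j + f k
  bigSum_partition : ∀ {I J : Type} [Countable J] (T : J → Set I) (f : I → A),
      (∀ j j', j ≠ j' → T j ∩ T j' = ∅) →
      bigSum (Set.univ : Set J) (fun j => bigSum (T j) f) = bigSum (⋃ j, T j) f

/-! ### Multiple context-free grammars -/

/-- A production `A → [u₁, …, u_s](A₁, …, A_ℓ)` of an MCFG.  Letters of the
components are either terminals (`Sum.inl`) or variables `x_i^j`, encoded
0-based as pairs `(i, j)` (`Sum.inr`).  `wf` states well-sortedness of the
variables and `linear` that every variable occurs at most once in `u₁ ⋯ u_s`. -/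
structure Production (Δ N : Type) (sortN : N → ℕ) where
  lhs : N
  rhs : List N
  comp : List (List (Δ ⊕ ℕ × ℕ))
  comp_len : comp.length = sortN lhs
  wf : ∀ p ∈ comp.flatten.filterMap Sum.getRight?,
        ∃ h : p.1 < rhs.length, p.2 < sortN (rhs.get ⟨p.1, h⟩)
  linear : (comp.flatten.filterMap Sum.getRight?).Nodup

namespace Production

variable {Δ N : Type} {sortN : N → ℕ}

/-- The list of occurrences of variables in the components of a production. -/
def vars (ρ : Production Δ N sortN) : List (ℕ × ℕ) :=
  ρ.comp.flatten.filterMap Sum.getRight?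

/-- A production is non-deleting if every variable `x_i^j` occurs (at least,
hence by linearity exactly, once). -/
def NonDeleting (ρ : Production Δ N sortN) : Prop :=
  ∀ (i : ℕ) (h : i < ρ.rhs.length), ∀ j < sortN (ρ.rhs.get ⟨i, h⟩), (i, j) ∈ ρ.vars

/-- A production is terminal-free if no terminal occurs in its components. -/
def TerminalFree (ρ : Production Δ N sortN) : Prop :=
  ∀ u ∈ ρ.comp, ∀ v ∈ u, ∃ p : ℕ × ℕ, v = Sum.inr p

end Production

/-- Substitution of argument tuples for the variables of a component. -/
def subst {Δ : Type} (args : List (List (List Δ))) (u : List (Δ ⊕ ℕ × ℕ)) : List Δ :=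
  u.flatMap (fun v => match v with
    | Sum.inl d => [d]
    | Sum.inr (i, j) => (args.getD i []).getD j [])

/-- Rose trees; derivations of an MCFG are well-sorted trees over the productions. -/
inductive Tree (P : Type) : Type
  | node : P → List (Tree P) → Tree P

/-- The yield of a derivation tree: evaluate the string functions bottom-up. -/
def Tree.yield {Δ N : Type} {sortN : N → ℕ} :
    Tree (Production Δ N sortN) → List (List Δ)
  | .node ρ ts => ρ.comp.map (subst (ts.attach.map (fun t => Tree.yield t.1)))
decreasing_by simp_wf; have := List.sizeOf_lt_of_mem t.2; omega

/-- Relabelling of derivation trees. -/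
def Tree.map {P Q : Type} (f : P → Q) : Tree P → Tree Q
  | .node ρ ts => .node (f ρ) (ts.attach.map (fun t => Tree.map f t.1))
decreasing_by simp_wf; have := List.sizeOf_lt_of_mem t.2; omega

/-- Well-sorted derivation trees over a set of productions, from a given
non-terminal. -/
inductive WFDeriv {Δ N : Type} {sortN : N → ℕ} (P : Set (Production Δ N sortN)) :
    N → Tree (Production Δ N sortN) → Prop
  | node (ρ : Production Δ N sortN) (ts : List (Tree (Production Δ N sortN))) :
      ρ ∈ P → ts.length = ρ.rhs.length →
      (∀ (i : ℕ) (h1 : i < ts.length) (h2 : i < ρ.rhs.length),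
        WFDeriv P (ρ.rhs.get ⟨i, h2⟩) (ts.get ⟨i, h1⟩)) →
      WFDeriv P ρ.lhs (Tree.node ρ ts)

/-- A multiple context-free grammar over the terminal alphabet `Δ`. -/
structure MCFG (Δ : Type) where
  N : Type
  sortN : N → ℕ
  S : N
  sort_S : sortN S = 1
  P : Set (Production Δ N sortN)

namespace MCFG

variable {Δ : Type}

/-- The set `D_G` of derivations of `G` (from the initial non-terminal). -/
def Derivs (G : MCFG Δ) : Set (Tree (Production Δ G.N G.sortN)) :=
  {d | WFDeriv G.P G.S d}

/-- The language of an MCFG. -/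
def lang (G : MCFG Δ) : Set (List Δ) :=
  {w | ∃ d ∈ G.Derivs, d.yield = [w]}

/-- `G` has fan-out at most `k`. -/
def FanoutLE (G : MCFG Δ) (k : ℕ) : Prop := ∀ ρ ∈ G.P, ρ.comp.length ≤ k

/-- `G` is non-deleting. -/
def NonDeleting (G : MCFG Δ) : Prop := ∀ ρ ∈ G.P, ρ.NonDeleting

end MCFG

/-- The class of multiple context-free languages over `Δ` of fan-out at most `k`. -/
def MCFL (k : ℕ) (Δ : Type) : Set (Set (List Δ)) :=
  {L | ∃ G : MCFG Δ, Finite G.N ∧ G.P.Finite ∧ G.FanoutLE k ∧ G.lang = L}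

/-! ### Weighted MCFGs -/

/-- The weight of a derivation tree: multiply the weights of the productions at
all positions. -/
def Tree.weight {P A : Type} [CCSBimonoid A] (μ : P → A) : Tree P → A
  | .node ρ ts => μ ρ * (ts.attach.map (fun t => Tree.weight μ t.1)).prod
decreasing_by simp_wf; have := List.sizeOf_lt_of_mem t.2; omega

/-- An `A`-weighted MCFG. -/
structure WMCFG (A Δ : Type) [CCSBimonoid A] extends MCFG Δ where
  μ : Production Δ N sortN → A
  μ_ne : ∀ ρ ∈ P, μ ρ ≠ 0

/-- The weighted language induced by an `A`-weighted MCFG: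
`⟦G⟧(w) = Σ_{d derivation of w} μ̂(d)`. -/
noncomputable def WMCFG.sem {A Δ : Type} [CCSBimonoid A] (G : WMCFG A Δ) :
    List Δ → A :=
  fun w => CCSBimonoid.bigSum
    {d | WFDeriv G.P G.S d ∧ d.yield = [w]} (fun d => d.weight G.μ)

/-- The class of `A`-weighted multiple context-free languages over `Δ`
of fan-out at most `k`. -/
def WMCFL (k : ℕ) (A Δ : Type) [CCSBimonoid A] : Set (List Δ → A) :=
  {L | ∃ G : WMCFG A Δ, Finite G.N ∧ G.P.Finite ∧ G.toMCFG.FanoutLE k ∧ G.sem = L}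

/-! ### Weighted homomorphisms -/

/-- A weighted language is a monomial if its support has at most one element. -/
def IsMonomial {Γ A : Type} [CCSBimonoid A] (m : List Γ → A) : Prop :=
  ∀ u v, m u ≠ 0 → m v ≠ 0 → u = v

/-- `g` induces an `A`-weighted homomorphism. -/
def WeightedHom {Δ Γ A : Type} [CCSBimonoid A] (g : Δ → List Γ → A) : Prop :=
  ∀ δ, IsMonomial (g δ)

/-- `g` induces an `A`-weighted alphabetic homomorphism: all supports consist of
words of length at most 1. -/
def AlphabeticWeightedHom {Δ Γ A : Type} [CCSBimonoid A] (g : Δ → List Γ → A) : Prop :=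
  WeightedHom g ∧ ∀ δ u, g δ u ≠ 0 → u.length ≤ 1

/-- The `A`-weighted homomorphism `ĝ` induced by `g`:
`ĝ(δ₁⋯δ_k)(u) = Σ_{u = u₁⋯u_k} g(δ₁)(u₁)·…·g(δ_k)(u_k)`. -/
noncomputable def whom {Δ Γ A : Type} [CCSBimonoid A] (g : Δ → List Γ → A)
    (w : List Δ) : List Γ → A :=
  fun u => CCSBimonoid.bigSum
    {ds : List (List Γ) | ds.length = w.length ∧ ds.flatten = u}
    (fun ds => ((w.zip ds).map (fun p => g p.1 p.2)).prod)

/-- The image of a language under an `A`-weighted homomorphism: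
`ĝ(L)(u) = Σ_{w ∈ L} ĝ(w)(u)`. -/
noncomputable def whomImage {Δ Γ A : Type} [CCSBimonoid A] (g : Δ → List Γ → A)
    (L : Set (List Δ)) : List Γ → A :=
  fun u => CCSBimonoid.bigSum L (fun w => whom g w u)

/-! ### Regular languages -/

/-- A language is regular if it is recognised by a finite automaton. -/
def IsRegular {α : Type} (L : Set (List α)) : Prop :=
  ∃ (Q : Type) (_ : Fintype Q) (M : DFA α Q), ∀ w, w ∈ M.accepts ↔ w ∈ L

end CS
namespace CS

/-! ### The unweighted MCFG for a weighted MCFG (weight separation) -/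

/-- Relabel the terminals of a component into the marked alphabet. -/
def markify (M : Type) {Δ : Type} (u : List (Δ ⊕ ℕ × ℕ)) :
    List ((Δ ⊕ M) ⊕ ℕ × ℕ) :=
  u.map (Sum.map Sum.inl id)

lemma markify_filterMap (M : Type) {Δ : Type} (u : List (Δ ⊕ ℕ × ℕ)) :
    (markify M u).filterMap Sum.getRight? = u.filterMap Sum.getRight? := by
  induction u with
  | nil => rfl
  | cons a l ih =>
    cases a with
    | inl d => exact ih
    | inr p => exact congrArg (List.cons p) ih

lemma filterMap_flatten {α β : Type} (f : α → Option β) (l : List (List α)) :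
    l.flatten.filterMap f = (l.map (List.filterMap f)).flatten := by
  induction l <;> simp [*]

lemma ofFn_comp_get {α β : Type} (l : List α) (h : α → β) :
    List.ofFn (fun i : Fin l.length => h (l.get i)) = l.map h := by
  conv_rhs => rw [← List.ofFn_get l]
  rw [List.map_ofFn]
  rfl

lemma mark_flatten_vars {Δ M : Type} (l : List (List (Δ ⊕ ℕ × ℕ)))
    (mk : Fin l.length → Δ ⊕ M) :
    (List.ofFn (fun i =>
        (Sum.inl (mk i) : (Δ ⊕ M) ⊕ ℕ × ℕ) :: markify M (l.get i))).flatten.filterMap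
      Sum.getRight? = l.flatten.filterMap Sum.getRight? := by
  rw [filterMap_flatten, List.map_ofFn, filterMap_flatten]
  congr 1
  have : (List.filterMap Sum.getRight? ∘ fun i =>
      (Sum.inl (mk i) : (Δ ⊕ M) ⊕ ℕ × ℕ) :: markify M (l.get i))
      = fun i : Fin l.length => (l.get i).filterMap Sum.getRight? := by
    funext i
    simp [List.filterMap_cons, Sum.getRight?, markify_filterMap]
  rw [this, ofFn_comp_get]

/-- The production of the unweighted MCFG `G_𝔹` corresponding to a production
`ρ = A → [u₁, …, u_s](A₁, …, A_m)`: each component `uᵢ` is prefixed with the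
fresh terminal symbol `ρ^i` (encoded as `Sum.inr (ρ, i)`, 0-based). -/
def boolifyProd {Δ N : Type} {sortN : N → ℕ} (ρ : Production Δ N sortN) :
    Production (Δ ⊕ Production Δ N sortN × ℕ) N sortN where
  lhs := ρ.lhs
  rhs := ρ.rhs
  comp := List.ofFn (fun i : Fin ρ.comp.length =>
    Sum.inl (Sum.inr (ρ, (i : ℕ))) ::
      markify (Production Δ N sortN × ℕ) (ρ.comp.get i))
  comp_len := by rw [List.length_ofFn]; exact ρ.comp_len
  wf := by
    intro p hp
    rw [mark_flatten_vars] at hp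
    exact ρ.wf p hp
  linear := by
    rw [mark_flatten_vars]
    exact ρ.linear

/-- The unweighted MCFG `G_𝔹` for a weighted MCFG `G`. -/
def boolifyGrammar {A Δ : Type} [CCSBimonoid A] (G : WMCFG A Δ) :
    MCFG (Δ ⊕ Production Δ G.N G.sortN × ℕ) where
  N := G.N
  sortN := G.sortN
  S := G.S
  sort_S := G.sort_S
  P := boolifyProd '' G.P

/-- The weight homomorphism `wts_G` for a weighted MCFG `G`:
`wts_G(δ) = 1.δ`, `wts_G(ρ^1) = μ(ρ).ε` and `wts_G(ρ^i) = 1.ε` for `i ≥ 2`. -/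
noncomputable def wtsHom {A Δ : Type} [CCSBimonoid A] (G : WMCFG A Δ) :
    (Δ ⊕ Production Δ G.N G.sortN × ℕ) → List Δ → A := by
  classical
  exact fun γ w => match γ with
    | Sum.inl d => if w = [d] then 1 else 0
    | Sum.inr (ρ, i) => if w = [] then (if i = 0 then G.μ ρ else 1) else 0

/-! ### The multiple Dyck grammar -/

/-- The sorted alphabet `Σ` induced by an `ℕ₊`-sorted set `(Δ, sd)`:
the opening parentheses `δ^[i]` (0-based: `i < sd δ`). -/
abbrev MSig (Δ : Type) (sd : Δ → ℕ) : Type := {p : Δ × ℕ // p.2 < sd p.1}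

/-- The terminal alphabet `Δ̂` of the multiple Dyck grammar: opening and closing
parentheses. -/
abbrev MAlph (Δ : Type) (sd : Δ → ℕ) : Type := MSig Δ sd ⊕ MSig Δ sd

/-- The partition `𝔓 = {𝔭_δ ∣ δ ∈ Δ}` with `𝔭_δ = {δ^[i] ∣ i ∈ [sd δ]}`. -/
def mdgPart (Δ : Type) (sd : Δ → ℕ) : Set (Set (MSig Δ sd)) :=
  {s | ∃ δ : Δ, s = {p : MSig Δ sd | p.1.1 = δ}}

/-- Sorts of the non-terminals `A₁, …, A_k` (0-based: `A_{i+1}` has sort `i+1`). -/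
def dyckSort (k : ℕ) : Fin k → ℕ := fun i => (i : ℕ) + 1

/-- Productions of type (i): `A_s → f(A_{s₁}, …, A_{s_ℓ})` for every linear
non-deleting terminal-free string function `f` with `ℓ ≤ r`. -/
def TypeI (Δ : Type) (sd : Δ → ℕ) (k r : ℕ)
    (ρ : Production (MAlph Δ sd) (Fin k) (dyckSort k)) : Prop :=
  ρ.rhs.length ≤ r ∧ ρ.NonDeleting ∧ ρ.TerminalFree

/-- Productions of type (ii):
`A_s → [δ^[1] x₁^1 δ̄^[1], …, δ^[s] x₁^s δ̄^[s]](A_s)` for `δ` of sort `s`. -/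
def TypeII (Δ : Type) (sd : Δ → ℕ) (k : ℕ)
    (ρ : Production (MAlph Δ sd) (Fin k) (dyckSort k)) : Prop :=
  ∃ δ : Δ, dyckSort k ρ.lhs = sd δ ∧ ρ.rhs = [ρ.lhs] ∧
    ρ.comp = List.ofFn (fun j : Fin (sd δ) =>
      [Sum.inl (Sum.inl ⟨(δ, (j : ℕ)), j.isLt⟩),
       Sum.inr ((0 : ℕ), (j : ℕ)),
       Sum.inl (Sum.inr ⟨(δ, (j : ℕ)), j.isLt⟩)])

/-- Productions of type (iii): `A_s → [u₁, …, u_s](A_s)` where each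
`u_j ∈ {x_j, x_j δ^[1] δ̄^[1], δ^[1] δ̄^[1] x_j}` for `δ` of sort 1. -/
def TypeIII (Δ : Type) (sd : Δ → ℕ) (k : ℕ)
    (ρ : Production (MAlph Δ sd) (Fin k) (dyckSort k)) : Prop :=
  ρ.rhs = [ρ.lhs] ∧
  ∀ (j : ℕ) (h : j < ρ.comp.length),
    ρ.comp.get ⟨j, h⟩ = [Sum.inr ((0 : ℕ), j)] ∨
    ∃ (δ : Δ) (h1 : 0 < sd δ), sd δ = 1 ∧
      (ρ.comp.get ⟨j, h⟩ =
        [Sum.inr ((0 : ℕ), j),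
         Sum.inl (Sum.inl ⟨(δ, 0), h1⟩), Sum.inl (Sum.inr ⟨(δ, 0), h1⟩)] ∨
       ρ.comp.get ⟨j, h⟩ =
        [Sum.inl (Sum.inl ⟨(δ, 0), h1⟩), Sum.inl (Sum.inr ⟨(δ, 0), h1⟩),
         Sum.inr ((0 : ℕ), j)])

/-- The productions of the multiple Dyck grammar `G_Δ`. -/
def mdgProds (Δ : Type) (sd : Δ → ℕ) (k r : ℕ) :
    Set (Production (MAlph Δ sd) (Fin k) (dyckSort k)) :=
  {ρ | TypeI Δ sd k r ρ ∨ TypeII Δ sd k ρ ∨ TypeIII Δ sd k ρ}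

/-- The multiple Dyck grammar `G_Δ` with respect to the sorted set `(Δ, sd)`. -/
def mdgGrammar (Δ : Type) (sd : Δ → ℕ) (k r : ℕ) (hk : 0 < k) :
    MCFG (MAlph Δ sd) where
  N := Fin k
  sortN := dyckSort k
  S := ⟨0, hk⟩
  sort_S := rfl
  P := mdgProds Δ sd k r

end CS

/-!
Split every non-terminal `A` into copies `(A, s)`, one for each selection `s` of components of the
tuples derived from `A`; the copy `(A, s)` derives exactly these components. A production for
`(A, s)` is obtained from one for `A` by keeping the components in `s` and requesting from each
argument only the components that still occur, which makes it non-deleting.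

Pruning may identify productions that differ only in deleted components, and without
distributivity their weights cannot be merged into a sum. Every pruned production therefore
receives an additional argument of sort `0`, a non-terminal `tag ρ` that names the original
production `ρ` and has a single terminating production, which carries the weight of `ρ`. The
derivations of both grammars then correspond one-to-one, with equal weights.
-/

namespace CS

/-! ### Sums over complete commutative strong bimonoids -/

section BigSum

variable {A I J : Type} [CCSBimonoid A]

theorem one_ne_zero_of_ne_zero {a : A} (ha : a ≠ 0) : (1 : A) ≠ 0 := fun h =>
  ha <| by rw [← one_mul a, h, CCSBimonoid.zero_mul']

theorem bigSum_range [Countable J] {φ : J → I} (hφ : φ.Injective) (f : I → A) :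
    CCSBimonoid.bigSum (Set.range φ) f = CCSBimonoid.bigSum Set.univ (f ∘ φ) := by
  have hdisjoint : ∀ j j', j ≠ j' → ({φ j} ∩ {φ j'} : Set I) = ∅ := fun j j' hj =>
    Set.singleton_inter_eq_empty.mpr fun h => hj (hφ h)
  have hpartition := CCSBimonoid.bigSum_partition (fun j => {φ j}) f hdisjoint
  simp only [CCSBimonoid.bigSum_singleton, Set.iUnion_singleton_eq_range] at hpartition
  exact hpartition.symm

theorem bigSum_range_of_countable {s : Set I} (hs : s.Countable) {φ : s → J} (hφ : φ.Injective)
    {f : I → A} {g : J → A} (hfg : ∀ x, g (φ x) = f x) :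
    CCSBimonoid.bigSum (Set.range φ) g = CCSBimonoid.bigSum s f := by
  have := hs.to_subtype
  calc CCSBimonoid.bigSum (Set.range φ) g
      = CCSBimonoid.bigSum Set.univ (g ∘ φ) := bigSum_range hφ g
    _ = CCSBimonoid.bigSum Set.univ (f ∘ Subtype.val) := congrArg _ (funext hfg)
    _ = CCSBimonoid.bigSum (Set.range Subtype.val) f :=
        (bigSum_range Subtype.val_injective f).symm
    _ = CCSBimonoid.bigSum s f := by rw [Subtype.range_coe]

end BigSum

/-! ### Derivation trees -/

section Derivations

variable {Δ N : Type} {sortN : N → ℕ}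

theorem exists_ofFn_eq {α : Type*} {n : ℕ} {l : List α} (h : l.length = n) :
    ∃ f : Fin n → α, List.ofFn f = l :=
  ⟨fun i => l.get (i.cast h.symm), by subst h; exact List.ofFn_get l⟩

theorem Tree.yield_node (ρ : Production Δ N sortN) (ts : List (Tree (Production Δ N sortN))) :
    (Tree.node ρ ts).yield = ρ.comp.map (subst (ts.map Tree.yield)) := by
  rw [Tree.yield, List.attach_map_val (f := Tree.yield)]

theorem Tree.weight_node {Q A : Type} [CCSBimonoid A] (μ : Q → A) (q : Q) (ts : List (Tree Q)) :
    (Tree.node q ts).weight μ = μ q * (ts.map (Tree.weight μ)).prod := by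
  rw [Tree.weight, List.attach_map_val (f := Tree.weight μ)]

theorem subst_map_eq_subst {args args' : List (List (List Δ))} {f : ℕ × ℕ → ℕ × ℕ}
    {u : List (Δ ⊕ ℕ × ℕ)}
    (h : ∀ p, Sum.inr p ∈ u →
      (args'.getD (f p).1 []).getD (f p).2 [] = (args.getD p.1 []).getD p.2 []) :
    subst args' (u.map (Sum.map id f)) = subst args u := by
  simp only [subst, List.flatMap_map]
  refine List.flatMap_congr ?_
  rintro (d | p) hp
  · rfl
  · exact h p hp

theorem map_subst_getD (args : List (List (List Δ))) (c : List (List (Δ ⊕ ℕ × ℕ))) (j : ℕ) :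
    (c.map (subst args)).getD j [] = subst args (c.getD j []) :=
  List.getD_map c [] (subst args)

variable {P : Set (Production Δ N sortN)}

theorem WFDeriv.length_yield {A : N} {d : Tree (Production Δ N sortN)} (hd : WFDeriv P A d) :
    d.yield.length = sortN A := by
  cases hd with
  | node ρ ts _ _ _ => rw [Tree.yield_node, List.length_map, ρ.comp_len]

theorem WFDeriv.node_ofFn {ρ : Production Δ N sortN} (hρ : ρ ∈ P)
    {ts : Fin ρ.rhs.length → Tree (Production Δ N sortN)}
    (hts : ∀ i, WFDeriv P (ρ.rhs.get i) (ts i)) :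
    WFDeriv P ρ.lhs (.node ρ (List.ofFn ts)) :=
  .node ρ _ hρ (List.length_ofFn) fun i _ hi => by simpa using hts ⟨i, hi⟩

theorem WFDeriv.induction_ofFn {motive : ∀ A d, WFDeriv P A d → Prop}
    (node : ∀ ρ (hρ : ρ ∈ P) (ts : Fin ρ.rhs.length → Tree (Production Δ N sortN))
      (hts : ∀ i, WFDeriv P (ρ.rhs.get i) (ts i)),
      (∀ i, motive _ _ (hts i)) → motive ρ.lhs (.node ρ (List.ofFn ts)) (.node_ofFn hρ hts))
    {A : N} {d : Tree (Production Δ N sortN)} (hd : WFDeriv P A d) : motive A d hd := by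
  induction hd with
  | node ρ ts hρ hlen hts ih =>
    obtain ⟨ts, rfl⟩ := exists_ofFn_eq hlen
    simp only [List.get_ofFn] at hts ih
    exact node ρ hρ ts (fun i => hts i (by simp) i.2) fun i => ih i (by simp) i.2

theorem countable_setOf_wfDeriv (hP : P.Countable) (A : N) : {d | WFDeriv P A d}.Countable := by
  have := hP.to_subtype
  have := Encodable.ofCountable P
  let toTree : WType (fun q : P × ℕ => Fin q.2) → Tree (Production Δ N sortN) :=
    WType.elim _ fun ⟨q, ts⟩ => .node q.1 (List.ofFn ts)
  refine (Set.countable_range toTree).mono fun d hd => ?_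
  induction hd using WFDeriv.induction_ofFn with
  | node ρ hρ ts _ ih =>
    choose ws hws using ih
    exact ⟨.mk (⟨ρ, hρ⟩, ρ.rhs.length) ws, by simp only [toTree, WType.elim] at hws ⊢; simp [hws]⟩

end Derivations

/-! ### Pruning a production -/

/-- A selection of components of an `n`-tuple: positions `< n`, listed in increasing order. -/
abbrev Selection (n : ℕ) : Type := {l : List ℕ // l.Sublist (List.range n)}

namespace Selection

variable {n : ℕ}

instance : Finite (Selection n) :=
  ((List.range n).sublists.finite_toSet.subset fun _ => List.mem_sublists.mpr).to_subtype

theorem nodup (s : Selection n) : s.1.Nodup := s.2.nodup List.nodup_range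

theorem length_le (s : Selection n) : s.1.length ≤ n := by
  simpa only [List.length_range] using s.2.length_le

end Selection

/-- The non-terminals of the pruned grammar. -/
inductive PrunedNT {Δ N : Type} {sortN : N → ℕ} (P : Set (Production Δ N sortN)) : Type
  /-- A copy of `A` that derives only the components in `s`. -/
  | selected (A : N) (s : Selection (sortN A))
  /-- A marker of sort `0` that records the use of `ρ`. -/
  | tag (ρ : P)

namespace PrunedNT

variable {Δ N : Type} {sortN : N → ℕ} {P : Set (Production Δ N sortN)}

/-- The number of components derived from a non-terminal of the pruned grammar. -/
def sort : PrunedNT P → ℕ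
  | selected _ s => s.1.length
  | tag _ => 0

instance [Finite N] [Finite P] : Finite (PrunedNT P) := by
  let ofSum : (Σ A : N, Selection (sortN A)) ⊕ P → PrunedNT P :=
    Sum.elim (fun X => selected X.1 X.2) tag
  refine Finite.of_surjective ofSum ?_
  rintro (⟨A, s⟩ | ρ)
  exacts [⟨.inl ⟨A, s⟩, rfl⟩, ⟨.inr ρ, rfl⟩]

end PrunedNT

namespace Production

variable {Δ N : Type} {sortN : N → ℕ}

section Selected

variable (ρ : Production Δ N sortN)

theorem exists_of_mem_vars {p : ℕ × ℕ} (hp : p ∈ ρ.vars) :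
    ∃ i : Fin ρ.rhs.length, ∃ j < sortN (ρ.rhs.get i), p = (↑i, j) :=
  let ⟨hi, hj⟩ := ρ.wf p hp
  ⟨⟨p.1, hi⟩, p.2, hj, rfl⟩

/-- The components of `ρ` at the positions `l`. -/
def selectedComp (l : List ℕ) : List (List (Δ ⊕ ℕ × ℕ)) := l.map (ρ.comp.getD · [])

/-- The variables that occur in the components of `ρ` at the positions `l`. -/
def selectedVars (l : List ℕ) : List (ℕ × ℕ) :=
  (ρ.selectedComp l).flatten.filterMap Sum.getRight?

theorem mem_selectedVars {l : List ℕ} {p : ℕ × ℕ} :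
    p ∈ ρ.selectedVars l ↔ ∃ j ∈ l, Sum.inr p ∈ ρ.comp.getD j [] := by
  simp [selectedVars, selectedComp]

theorem selectedComp_range : ρ.selectedComp (List.range (sortN ρ.lhs)) = ρ.comp :=
  List.ext_getElem (by simp [selectedComp, ρ.comp_len]) fun i _ hi => by
    simp [selectedComp, hi]

theorem selectedVars_sublist (s : Selection (sortN ρ.lhs)) :
    (ρ.selectedVars s.1).Sublist ρ.vars := by
  have hcomp : (ρ.selectedComp s.1).Sublist ρ.comp := by
    rw [← ρ.selectedComp_range]
    exact s.2.map _
  exact hcomp.flatten.filterMap _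

/-- The components of the `i`-th argument that the components of `ρ` at the positions `l` use. -/
def usedArgs (l : List ℕ) (i : Fin ρ.rhs.length) : Selection (sortN (ρ.rhs.get i)) :=
  ⟨(List.range (sortN (ρ.rhs.get i))).filter fun j => (↑i, j) ∈ ρ.selectedVars l,
    List.filter_sublist⟩

theorem mem_usedArgs (s : Selection (sortN ρ.lhs)) {i : Fin ρ.rhs.length} {j : ℕ} :
    j ∈ (ρ.usedArgs s.1 i).1 ↔ (↑i, j) ∈ ρ.selectedVars s.1 := by
  simp only [usedArgs, List.mem_filter, List.mem_range, decide_eq_true_eq, and_iff_right_iff_imp]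
  intro h
  exact (ρ.wf _ ((ρ.selectedVars_sublist s).subset h)).2

theorem exists_of_mem_selectedVars (s : Selection (sortN ρ.lhs)) {p : ℕ × ℕ}
    (hp : p ∈ ρ.selectedVars s.1) :
    ∃ i : Fin ρ.rhs.length, ∃ j ∈ (ρ.usedArgs s.1 i).1, p = (↑i, j) := by
  obtain ⟨i, j, -, rfl⟩ := ρ.exists_of_mem_vars ((ρ.selectedVars_sublist s).subset hp)
  exact ⟨i, j, (ρ.mem_usedArgs s).mpr hp, rfl⟩

/-- The variable of the pruned production that replaces a variable of `ρ`. Arguments are shifted by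
one to make room for the tag; the value at variables that do not occur in `ρ` is junk. -/
def renameVar (l : List ℕ) (p : ℕ × ℕ) : ℕ × ℕ :=
  if h : p.1 < ρ.rhs.length then (p.1 + 1, (ρ.usedArgs l ⟨p.1, h⟩).1.idxOf p.2) else p

theorem renameVar_apply (l : List ℕ) (i : Fin ρ.rhs.length) (j : ℕ) :
    ρ.renameVar l (↑i, j) = ((i : ℕ) + 1, (ρ.usedArgs l i).1.idxOf j) :=
  dif_pos i.2

theorem renameVar_injOn (s : Selection (sortN ρ.lhs)) :
    Set.InjOn (ρ.renameVar s.1) {p | p ∈ ρ.selectedVars s.1} := by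
  intro p hp p' hp' h
  obtain ⟨i, j, hj, rfl⟩ := ρ.exists_of_mem_selectedVars s hp
  obtain ⟨i', j', -, rfl⟩ := ρ.exists_of_mem_selectedVars s hp'
  simp only [renameVar_apply, Prod.mk.injEq, Nat.add_right_cancel_iff, Fin.val_inj] at h
  obtain ⟨rfl, h⟩ := h
  rw [List.idxOf_inj hj] at h
  rw [h]

/-- The selected components of `ρ`, with their variables renamed. -/
def prunedComp (l : List ℕ) : List (List (Δ ⊕ ℕ × ℕ)) :=
  (ρ.selectedComp l).map (List.map (Sum.map id (ρ.renameVar l)))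

theorem prunedComp_vars (l : List ℕ) :
    (ρ.prunedComp l).flatten.filterMap Sum.getRight? =
      (ρ.selectedVars l).map (ρ.renameVar l) := by
  have hcomm : Sum.getRight? ∘ Sum.map id (ρ.renameVar l) =
      Option.map (ρ.renameVar l) ∘ Sum.getRight? (α := Δ) :=
    funext <| by rintro (_ | _) <;> rfl
  rw [prunedComp, selectedVars, ← List.map_flatten, List.filterMap_map, hcomm,
    List.map_filterMap]
  rfl

end Selected

variable {P : Set (Production Δ N sortN)}

/-- The production for `(A, s)` obtained from a production `ρ` for `A`: the components outside of
`s` are dropped, and so are those components of the arguments that are no longer used. -/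
def prune (ρ : P) (s : Selection (sortN ρ.1.lhs)) : Production Δ (PrunedNT P) PrunedNT.sort where
  lhs := .selected ρ.1.lhs s
  rhs := .tag ρ :: List.ofFn fun i => .selected (ρ.1.rhs.get i) (ρ.1.usedArgs s.1 i)
  comp := ρ.1.prunedComp s.1
  comp_len := by simp [prunedComp, selectedComp, PrunedNT.sort]
  wf := by
    intro p hp
    rw [prunedComp_vars, List.mem_map] at hp
    obtain ⟨q, hq, rfl⟩ := hp
    obtain ⟨i, j, hj, rfl⟩ := ρ.1.exists_of_mem_selectedVars s hq
    rw [renameVar_apply]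
    exact ⟨by simp, by simpa [PrunedNT.sort] using List.idxOf_lt_length_of_mem hj⟩
  linear := by
    rw [prunedComp_vars]
    exact ((ρ.1.selectedVars_sublist s).nodup ρ.1.linear).map_on (ρ.1.renameVar_injOn s)

theorem nonDeleting_prune (ρ : P) (s : Selection (sortN ρ.1.lhs)) : (prune ρ s).NonDeleting := by
  rintro (_ | i) hi k hk
  · exact absurd hk (Nat.not_lt_zero k)
  obtain ⟨i, rfl⟩ : ∃ i' : Fin ρ.1.rhs.length, ↑i' = i := ⟨⟨i, by simpa [prune] using hi⟩, rfl⟩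
  replace hk : k < (ρ.1.usedArgs s.1 i).1.length := by simpa [prune, PrunedNT.sort] using hk
  have hmem := (ρ.1.mem_usedArgs s).mp (List.getElem_mem hk)
  have hrename : ρ.1.renameVar s.1 (↑i, (ρ.1.usedArgs s.1 i).1[k]) = ((i : ℕ) + 1, k) := by
    rw [renameVar_apply, (ρ.1.usedArgs s.1 i).nodup.idxOf_getElem]
  rw [← hrename, vars, prune, prunedComp_vars]
  exact List.mem_map_of_mem hmem

theorem length_comp_prune_le (ρ : P) (s : Selection (sortN ρ.1.lhs)) :
    (prune ρ s).comp.length ≤ ρ.1.comp.length := by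
  rw [(prune ρ s).comp_len, ρ.1.comp_len]
  exact s.length_le

/-- The terminating production of the marker `tag ρ`. -/
def tagProd (ρ : P) : Production Δ (PrunedNT P) PrunedNT.sort where
  lhs := .tag ρ
  rhs := []
  comp := []
  comp_len := rfl
  wf := by simp
  linear := by simp

theorem nonDeleting_tagProd (ρ : P) : (tagProd ρ).NonDeleting := fun i hi =>
  absurd hi (Nat.not_lt_zero i)

end Production

/-! ### Pruning derivations -/

section PrunedDerivations

open Production

variable {Δ N : Type} {sortN : N → ℕ}

/-- The productions of the pruned grammar. -/
def prunedProds (P : Set (Production Δ N sortN)) :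
    Set (Production Δ (PrunedNT P) PrunedNT.sort) :=
  Set.range (fun x : Σ ρ : P, Selection (sortN ρ.1.lhs) => prune x.1 x.2) ∪ Set.range tagProd

variable {P : Set (Production Δ N sortN)}

theorem prune_mem_prunedProds (ρ : P) (s : Selection (sortN ρ.1.lhs)) :
    prune ρ s ∈ prunedProds P :=
  .inl ⟨⟨ρ, s⟩, rfl⟩

theorem tagProd_mem_prunedProds (ρ : P) : tagProd ρ ∈ prunedProds P := .inr ⟨ρ, rfl⟩

theorem finite_prunedProds (hP : P.Finite) : (prunedProds P).Finite := by
  have := hP.to_subtype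
  exact (Set.finite_range _).union (Set.finite_range _)

/-- The derivation of the pruned grammar that consists of a pruned production `ρ`, its tag, and
derivations of the remaining arguments. -/
def prunedNode (ρ : P) (s : Selection (sortN ρ.1.lhs))
    (ts : Fin ρ.1.rhs.length → Tree (Production Δ (PrunedNT P) PrunedNT.sort)) :
    Tree (Production Δ (PrunedNT P) PrunedNT.sort) :=
  .node (prune ρ s) (.node (tagProd ρ) [] :: List.ofFn ts)

theorem wfDeriv_prunedNode {ρ : P} {s : Selection (sortN ρ.1.lhs)}
    {ts : Fin ρ.1.rhs.length → Tree (Production Δ (PrunedNT P) PrunedNT.sort)}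
    (hts : ∀ i, WFDeriv (prunedProds P)
      (.selected (ρ.1.rhs.get i) (ρ.1.usedArgs s.1 i)) (ts i)) :
    WFDeriv (prunedProds P) (.selected ρ.1.lhs s) (prunedNode ρ s ts) := by
  refine .node (prune ρ s) _ (prune_mem_prunedProds ρ s) (by simp [prune]) ?_
  rintro (_ | i) h₁ h₂
  · exact .node (tagProd ρ) [] (tagProd_mem_prunedProds ρ) rfl fun i hi => absurd hi (by simp)
  · simpa [prune] using hts ⟨i, by simpa using h₁⟩

theorem eq_tagProd_of_wfDeriv {ρ : P} {d : Tree (Production Δ (PrunedNT P) PrunedNT.sort)}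
    (hd : WFDeriv (prunedProds P) (.tag ρ) d) : d = .node (tagProd ρ) [] := by
  generalize hX : PrunedNT.tag ρ = X at hd
  cases hd with
  | node q ts hq hlen _ =>
    obtain ⟨x, rfl⟩ | ⟨σ, rfl⟩ := hq
    · cases hX
    · cases hX
      rw [List.length_eq_zero_iff.mp hlen]

theorem WFDeriv.induction_pruned
    {motive : ∀ A (s : Selection (sortN A)) d,
      WFDeriv (prunedProds P) (.selected A s) d → Prop}
    (node : ∀ (ρ : P) (s : Selection (sortN ρ.1.lhs))
      (ts : Fin ρ.1.rhs.length → Tree (Production Δ (PrunedNT P) PrunedNT.sort))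
      (hts : ∀ i, WFDeriv (prunedProds P)
        (.selected (ρ.1.rhs.get i) (ρ.1.usedArgs s.1 i)) (ts i)),
      (∀ i, motive _ _ _ (hts i)) → motive _ _ _ (wfDeriv_prunedNode hts))
    {A : N} {s : Selection (sortN A)} {d : Tree (Production Δ (PrunedNT P) PrunedNT.sort)}
    (hd : WFDeriv (prunedProds P) (.selected A s) d) : motive A s d hd := by
  suffices ∀ X d, WFDeriv (prunedProds P) X d → ∀ (A : N) (s : Selection (sortN A)),
      .selected A s = X → ∃ hd, motive A s d hd from (this _ d hd A s rfl).2
  intro X d hd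
  induction hd with
  | node q ts hq hlen hts ih =>
    intro A s hX
    obtain ⟨⟨ρ, s₀⟩, rfl⟩ | ⟨σ, rfl⟩ := hq
    · cases hX
      obtain ⟨t₀, ts, rfl⟩ := List.exists_cons_of_length_eq_add_one hlen
      obtain ⟨ts, rfl⟩ := exists_ofFn_eq (n := ρ.1.rhs.length) (by simpa [prune] using hlen)
      have ht₀ : t₀ = .node (tagProd ρ) [] :=
        eq_tagProd_of_wfDeriv (hts 0 (by simp) (by simp [prune]))
      have harg (i : Fin ρ.1.rhs.length) : (prune ρ s₀).rhs.get ⟨i + 1, by simp [prune]⟩ =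
          .selected (ρ.1.rhs.get i) (ρ.1.usedArgs s₀.1 i) := by simp [prune]
      have ih' (i : Fin ρ.1.rhs.length) : ∃ hd, motive _ (ρ.1.usedArgs s₀.1 i) (ts i) hd := by
        simpa using ih (i + 1) (by simp) (by simp [prune]) _ _ (harg i).symm
      subst ht₀
      exact ⟨wfDeriv_prunedNode fun i => (ih' i).1, node ρ s₀ ts _ fun i => (ih' i).2⟩
    · cases hX

/-- Recovers the original derivation from a derivation of the pruned grammar. The result is `none`
on the tags, which `filterMap` thereby drops. -/
def restore : Tree (Production Δ (PrunedNT P) PrunedNT.sort) → Option (Tree (Production Δ N sortN))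
  | .node q ts =>
    match q.rhs with
    | .tag ρ :: _ => some (.node ρ (ts.attach.filterMap fun t => restore t.1))
    | _ => none
decreasing_by
  have := List.sizeOf_lt_of_mem t.2
  simp only [Tree.node.sizeOf_spec]
  omega

theorem restore_node_prune (ρ : P) (s : Selection (sortN ρ.1.lhs))
    (ts : List (Tree (Production Δ (PrunedNT P) PrunedNT.sort))) :
    restore (.node (prune ρ s) ts) = some (.node ρ (ts.filterMap restore)) := by
  have hattach : (ts.attach.filterMap fun t => restore t.1) = ts.filterMap restore := by
    conv_rhs => rw [← List.attach_map_subtype_val ts, List.filterMap_map]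
    rfl
  rw [restore, hattach]
  rfl

theorem restore_prunedNode (ρ : P) (s : Selection (sortN ρ.1.lhs))
    {ts : Fin ρ.1.rhs.length → Tree (Production Δ (PrunedNT P) PrunedNT.sort)}
    {ds : Fin ρ.1.rhs.length → Tree (Production Δ N sortN)}
    (h : ∀ i, restore (ts i) = some (ds i)) :
    restore (prunedNode ρ s ts) = some (.node ρ (List.ofFn ds)) := by
  have htag : restore (.node (tagProd ρ) []) = none := by rw [restore]; rfl
  have hargs : (List.ofFn ts).filterMap restore = List.ofFn ds := by
    rw [← List.filterMap_some (l := List.ofFn ds), List.ofFn_eq_map, List.ofFn_eq_map,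
      List.filterMap_map, List.filterMap_map]
    exact List.filterMap_congr fun i _ => h i
  rw [prunedNode, restore_node_prune, List.filterMap_cons_none htag, hargs]

theorem yield_prunedNode (ρ : P) (s : Selection (sortN ρ.1.lhs))
    {ts : Fin ρ.1.rhs.length → Tree (Production Δ (PrunedNT P) PrunedNT.sort)}
    {ds : Fin ρ.1.rhs.length → Tree (Production Δ N sortN)}
    (h : ∀ i, (ts i).yield = (ρ.1.usedArgs s.1 i).1.map ((ds i).yield.getD · [])) :
    (prunedNode ρ s ts).yield = s.1.map ((Tree.node ρ.1 (List.ofFn ds)).yield.getD · []) := by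
  simp only [prunedNode, Tree.yield_node, prune, prunedComp, selectedComp, List.map_map,
    map_subst_getD]
  refine List.map_congr_left fun c hc => subst_map_eq_subst fun p hp => ?_
  obtain ⟨i, j, hj, rfl⟩ :=
    ρ.1.exists_of_mem_selectedVars s (ρ.1.mem_selectedVars.mpr ⟨c, hc, hp⟩)
  have hidx : (ρ.1.usedArgs s.1 i).1[(ρ.1.usedArgs s.1 i).1.idxOf j]? = some j :=
    List.getElem?_idxOf hj
  simp [renameVar_apply, h, hidx]

/-- The weights of the pruned grammar: the tags carry the weights of the original productions. -/
def prunedWeight {A : Type} [CCSBimonoid A] (μ : Production Δ N sortN → A)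
    (q : Production Δ (PrunedNT P) PrunedNT.sort) : A :=
  match q.lhs with
  | .selected _ _ => 1
  | .tag ρ => μ ρ

section Weight

variable {A : Type} [CCSBimonoid A] (μ : Production Δ N sortN → A)

theorem prunedWeight_prune (ρ : P) (s : Selection (sortN ρ.1.lhs)) :
    prunedWeight μ (prune ρ s) = 1 := rfl

theorem prunedWeight_tagProd (ρ : P) : prunedWeight μ (tagProd ρ) = μ ρ := rfl

theorem weight_prunedNode (ρ : P) (s : Selection (sortN ρ.1.lhs))
    {ts : Fin ρ.1.rhs.length → Tree (Production Δ (PrunedNT P) PrunedNT.sort)}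
    {ds : Fin ρ.1.rhs.length → Tree (Production Δ N sortN)}
    (h : ∀ i, (ts i).weight (prunedWeight μ) = (ds i).weight μ) :
    (prunedNode ρ s ts).weight (prunedWeight μ) =
      (Tree.node ρ.1 (List.ofFn ds)).weight μ := by
  simp only [prunedNode, Tree.weight_node, prunedWeight_prune, prunedWeight_tagProd, List.map_cons,
    List.map_nil, List.map_ofFn, List.prod_cons, List.prod_nil, one_mul, mul_one]
  exact congrArg (fun w => μ ρ * (List.ofFn w).prod) (funext h)

end Weight

theorem exists_wfDeriv_restore_eq {A : Type} [CCSBimonoid A] (μ : Production Δ N sortN → A)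
    {B : N} {d : Tree (Production Δ N sortN)} (hd : WFDeriv P B d) (s : Selection (sortN B)) :
    ∃ d', WFDeriv (prunedProds P) (.selected B s) d' ∧ restore d' = some d ∧
      d'.yield = s.1.map (d.yield.getD · []) ∧ d'.weight (prunedWeight μ) = d.weight μ := by
  induction hd using WFDeriv.induction_ofFn with
  | node ρ hρ ds _ ih =>
    choose ts hts hrestore hyield hweight using fun i => ih i (ρ.usedArgs s.1 i)
    exact ⟨prunedNode ⟨ρ, hρ⟩ s ts, wfDeriv_prunedNode (ρ := ⟨ρ, hρ⟩) hts,
      restore_prunedNode ⟨ρ, hρ⟩ s hrestore, yield_prunedNode ⟨ρ, hρ⟩ s hyield,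
      weight_prunedNode μ ⟨ρ, hρ⟩ s hweight⟩

theorem exists_restore_eq_some {B : N} {s : Selection (sortN B)}
    {d : Tree (Production Δ (PrunedNT P) PrunedNT.sort)}
    (hd : WFDeriv (prunedProds P) (.selected B s) d) :
    ∃ d₀, WFDeriv P B d₀ ∧ restore d = some d₀ := by
  induction hd using WFDeriv.induction_pruned with
  | node ρ s ts _ ih =>
    choose ds hds hrestore using ih
    exact ⟨_, .node_ofFn ρ.2 hds, restore_prunedNode ρ s hrestore⟩

theorem exists_eq_prunedNode {B : N} {s : Selection (sortN B)}
    {d : Tree (Production Δ (PrunedNT P) PrunedNT.sort)}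
    (hd : WFDeriv (prunedProds P) (.selected B s) d) :
    ∃ (ρ : P) (s' : Selection (sortN ρ.1.lhs)) (ts : Fin ρ.1.rhs.length → Tree _),
      PrunedNT.selected (P := P) B s = .selected ρ.1.lhs s' ∧ d = prunedNode ρ s' ts ∧
      ∀ i, WFDeriv (prunedProds P) (.selected (ρ.1.rhs.get i) (ρ.1.usedArgs s'.1 i)) (ts i) := by
  induction hd using WFDeriv.induction_pruned with
  | node ρ s ts hts _ => exact ⟨ρ, s, ts, rfl, rfl, hts⟩

theorem restore_injOn (B : N) (s : Selection (sortN B)) :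
    Set.InjOn restore {d | WFDeriv (prunedProds P) (.selected B s) d} := by
  intro d hd
  replace hd : WFDeriv (prunedProds P) (.selected B s) d := hd
  induction hd using WFDeriv.induction_pruned with
  | node ρ s ts hts ih =>
    intro d' hd' h
    obtain ⟨ρ', s', ts', hlhs, rfl, hts'⟩ := exists_eq_prunedNode hd'
    choose ds _ hds using fun i => exists_restore_eq_some (hts i)
    choose ds' _ hds' using fun i => exists_restore_eq_some (hts' i)
    rw [restore_prunedNode ρ s hds, restore_prunedNode ρ' s' hds', Option.some_inj,
      Tree.node.injEq] at h
    obtain ⟨hρ, h⟩ := h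
    obtain rfl := Subtype.ext hρ
    obtain rfl : s = s' := by simpa using hlhs
    obtain rfl := List.ofFn_injective h
    rw [funext fun i => ih i (hts' i) ((hds i).trans (hds' i).symm)]

end PrunedDerivations

/-! ### The pruned grammar -/

namespace WMCFG

open Production

variable {A Δ : Type} [CCSBimonoid A] (G : WMCFG A Δ)

/-- The non-deleting grammar obtained from `G` by pruning its productions. Only the component `0` of
the initial non-terminal is requested. -/
def prune : WMCFG A Δ where
  N := PrunedNT G.P
  sortN := PrunedNT.sort
  S := .selected G.S ⟨[0], by simp [G.sort_S]⟩
  sort_S := rfl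
  P := prunedProds G.P
  μ := prunedWeight G.μ
  μ_ne := by
    rintro _ (⟨⟨ρ, s⟩, rfl⟩ | ⟨ρ, rfl⟩)
    exacts [one_ne_zero_of_ne_zero (G.μ_ne ρ ρ.2), G.μ_ne ρ ρ.2]

theorem nonDeleting_prune : G.prune.toMCFG.NonDeleting := by
  rintro _ (⟨⟨ρ, s⟩, rfl⟩ | ⟨ρ, rfl⟩)
  exacts [Production.nonDeleting_prune ρ s, nonDeleting_tagProd ρ]

theorem fanoutLE_prune {k : ℕ} (h : G.toMCFG.FanoutLE k) : G.prune.toMCFG.FanoutLE k := by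
  rintro _ (⟨⟨ρ, s⟩, rfl⟩ | ⟨ρ, rfl⟩)
  exacts [(length_comp_prune_le ρ s).trans (h ρ ρ.2), k.zero_le]

theorem exists_wfDeriv_prune {d : Tree (Production Δ G.N G.sortN)} (hd : WFDeriv G.P G.S d) :
    ∃ d', WFDeriv G.prune.P G.prune.S d' ∧ restore d' = some d ∧ d'.yield = d.yield ∧
      d'.weight G.prune.μ = d.weight G.μ := by
  obtain ⟨d', hd', hrestore, hyield, hweight⟩ :=
    exists_wfDeriv_restore_eq G.μ hd ⟨[0], by simp [G.sort_S]⟩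
  obtain ⟨w, hw⟩ := List.length_eq_one_iff.mp (hd.length_yield.trans G.sort_S)
  exact ⟨d', hd', hrestore, hyield.trans (by simp [hw]), hweight⟩

theorem sem_prune (hP : G.P.Countable) : G.prune.sem = G.sem := by
  funext w
  choose φ hφ hrestore hyield hweight using
    fun d : {d | WFDeriv G.P G.S d ∧ d.yield = [w]} => G.exists_wfDeriv_prune d.2.1
  have hinj : φ.Injective := fun d₁ d₂ h =>
    Subtype.ext <| Option.some_inj.mp <| by rw [← hrestore, h, hrestore]
  have hrange : Set.range φ = {d | WFDeriv G.prune.P G.prune.S d ∧ d.yield = [w]} := by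
    refine Set.Subset.antisymm ?_ fun d' ⟨hd', hw⟩ => ?_
    · rintro _ ⟨d, rfl⟩
      exact ⟨hφ d, (hyield d).trans d.2.2⟩
    · obtain ⟨d, hd, hd'restore⟩ := exists_restore_eq_some hd'
      have heq {e} (he : WFDeriv G.prune.P G.prune.S e) (h : restore e = some d) : e = d' :=
        restore_injOn _ _ he hd' (h.trans hd'restore.symm)
      obtain ⟨e, he, herestore, heyield, -⟩ := G.exists_wfDeriv_prune hd
      have hdw : d.yield = [w] := by rw [← heyield, heq he herestore, hw]
      exact ⟨⟨d, hd, hdw⟩, heq (hφ _) (hrestore _)⟩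
  have hcountable : {d | WFDeriv G.P G.S d ∧ d.yield = [w]}.Countable :=
    (countable_setOf_wfDeriv hP G.S).mono fun _ hd => hd.1
  rw [sem, ← hrange]
  exact bigSum_range_of_countable hcountable hinj hweight

end WMCFG

end CS

theorem CS.weighted_mcfg_nondeleting_normal_form_general
    (A : Type) [CS.CCSBimonoid A] (Δ : Type) (G : CS.WMCFG A Δ) (hP : G.P.Countable) :
    ∃ G' : CS.WMCFG A Δ, (Finite G.N → G.P.Finite → Finite G'.N) ∧
      (G.P.Finite → G'.P.Finite) ∧
      (∀ k, G.toMCFG.FanoutLE k → G'.toMCFG.FanoutLE k) ∧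
      G'.toMCFG.NonDeleting ∧ G'.sem = G.sem := by
  refine ⟨G.prune, fun hN hPfin => ?_, CS.finite_prunedProds, fun _ => G.fanoutLE_prune,
    G.nonDeleting_prune, G.sem_prune hP⟩
  have := hPfin.to_subtype
  exact inferInstanceAs (Finite (CS.PrunedNT G.P))

/-- For every complete commutative strong bimonoid `𝒜` and every
`𝒜`-weighted `k`-MCFG `G` there exists an equivalent non-deleting `𝒜`-weighted
`k`-MCFG `G'`, i.e. `⟦G'⟧ = ⟦G⟧`. -/
theorem CS.weighted_mcfg_nondeleting_normal_form
    (A : Type) [CS.CCSBimonoid A] (Δ : Type) (k : ℕ) (G : CS.WMCFG A Δ)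
    (hN : Finite G.N) (hP : G.P.Finite) (hfo : G.toMCFG.FanoutLE k) :
    ∃ G' : CS.WMCFG A Δ, Finite G'.N ∧ G'.P.Finite ∧ G'.toMCFG.FanoutLE k ∧
      G'.toMCFG.NonDeleting ∧ G'.sem = G.sem := by
  obtain ⟨G', hfinN, hfinP, hfanout, hnonDeleting, hsem⟩ :=
    CS.weighted_mcfg_nondeleting_normal_form_general A Δ G hP.countable
  exact ⟨G', hfinN hN hP, hfinP hP, hfanout k hfo, hnonDeleting, hsem⟩
end

section
/- Let 𝔓 be a partition of Σ and let u₁,…,u_k ∈ D(Σ) and v₁,…,v_ℓ ∈ D(Σ). If u₁⋯u_k ∈ mD_c(Σ,𝔓) and v₁⋯v_ℓ ∈ mD_c(Σ,𝔓), then for every permutation of the combined sequence u₁,…,u_k,v₁,…,v_ℓ, the concatenation of the permuted sequence is in mD_c(Σ,𝔓). -/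
/-!
Every Dyck word is, in a unique way, a product of prime Dyck words `σ v σ̄`. Let `permCore P` be the
set of Dyck words such that every rearrangement of their prime factors is in `MDyckLang S P`. It
contains the empty word, so it suffices that the congruence `MDyckRel S P` saturates it. For this
one shows, by induction on the derivation, that congruent words are syntactically equivalent with
respect to `permCore P`, that is, may replace each other in every context.

In the cancellation rule only contexts `(x, y)` with `x y` in the Dyck language matter. If the rule
is applied strictly inside a prime factor, it replaces this factor by a congruent one, which does
not affect the rearrangements of the others. If it is applied at top level, it removes the prime
factors `σᵢ vᵢ σ̄ᵢ`; in a rearrangement these appear in some other order, and the rule still removes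
them because, by the induction hypothesis for `v₁⋯v_ℓ ≡ ε`, the `vᵢ` may be permuted as well.
-/

namespace CS

section SyntacticEquiv

variable {α : Type*} {L : Set (List α)} {u v u' v' w : List α}

/-- The syntactic congruence of a language `L`: the largest monoid congruence that saturates `L`. -/
def SyntacticEquiv (L : Set (List α)) (u v : List α) : Prop :=
  ∀ x y, x ++ u ++ y ∈ L ↔ x ++ v ++ y ∈ L

theorem SyntacticEquiv.refl (L : Set (List α)) (u : List α) : SyntacticEquiv L u u :=
  fun _ _ ↦ Iff.rfl

theorem SyntacticEquiv.symm (h : SyntacticEquiv L u v) : SyntacticEquiv L v u :=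
  fun x y ↦ (h x y).symm

theorem SyntacticEquiv.trans (h : SyntacticEquiv L u v) (h' : SyntacticEquiv L v w) :
    SyntacticEquiv L u w :=
  fun x y ↦ (h x y).trans (h' x y)

theorem SyntacticEquiv.append (h : SyntacticEquiv L u v) (h' : SyntacticEquiv L u' v') :
    SyntacticEquiv L (u ++ u') (v ++ v') := fun x y ↦ by
  simpa only [List.append_assoc] using (h x (u' ++ y)).trans
    (by simpa only [List.append_assoc] using h' (x ++ v) y)

theorem SyntacticEquiv.mem_iff (h : SyntacticEquiv L u v) : u ∈ L ↔ v ∈ L := by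
  simpa only [List.nil_append, List.append_nil] using h [] []

end SyntacticEquiv

variable {S : Type} {P : Set (Set S)} {u v w x y : List (S ⊕ S)}

theorem nil_mem_dyckLang : ([] : List (S ⊕ S)) ∈ DyckLang S := DyckRel.refl []

theorem append_mem_dyckLang (hu : u ∈ DyckLang S) (hv : v ∈ DyckLang S) : u ++ v ∈ DyckLang S :=
  DyckRel.append hu hv

theorem flatten_mem_dyckLang {us : List (List (S ⊕ S))} (hus : ∀ u ∈ us, u ∈ DyckLang S) :
    us.flatten ∈ DyckLang S := by
  induction us with
  | nil => exact nil_mem_dyckLang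
  | cons u us ih =>
    rw [List.forall_mem_cons] at hus
    exact append_mem_dyckLang hus.1 (ih hus.2)

theorem append_append_mem_dyckLang_iff (hu : u ∈ DyckLang S) (x y : List (S ⊕ S)) :
    x ++ u ++ y ∈ DyckLang S ↔ x ++ y ∈ DyckLang S := by
  have h : DyckRel S (x ++ u ++ y) (x ++ y) := by
    simpa only [List.append_nil] using ((DyckRel.refl x).append hu).append (DyckRel.refl y)
  exact ⟨h.symm.trans, h.trans⟩

/-- The word `σ v σ̄`. For `v` in the Dyck language these are the prime Dyck words. -/
def bracket (σ : S) (v : List (S ⊕ S)) : List (S ⊕ S) := Sum.inl σ :: v ++ [Sum.inr σ]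

theorem bracket_mem_dyckLang (σ : S) (hv : v ∈ DyckLang S) : bracket σ v ∈ DyckLang S :=
  (append_append_mem_dyckLang_iff hv [Sum.inl σ] [Sum.inr σ]).2 (DyckRel.cancel σ)

/-- Acceptance by the pushdown automaton of the Dyck language: the first argument is the stack of
currently open brackets, innermost first, and the input has to close all of them. -/
def Accepts : List S → List (S ⊕ S) → Prop
  | st, [] => st = []
  | st, Sum.inl σ :: w => Accepts (σ :: st) w
  | [], Sum.inr _ :: _ => False
  | τ :: st, Sum.inr σ :: w => τ = σ ∧ Accepts st w

theorem accepts_append_cancel_iff (σ : S) (x y : List (S ⊕ S)) (st : List S) :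
    Accepts st (x ++ [Sum.inl σ, Sum.inr σ] ++ y) ↔ Accepts st (x ++ y) := by
  induction x generalizing st with
  | nil => simp [Accepts]
  | cons a x ih =>
    rcases a with τ | τ
    · exact ih (τ :: st)
    · cases st with
      | nil => exact Iff.rfl
      | cons _ st => exact and_congr_right fun _ ↦ ih st

theorem DyckRel.syntacticEquiv (h : DyckRel S u v) :
    SyntacticEquiv {w : List (S ⊕ S) | Accepts [] w} u v := by
  induction h with
  | cancel σ => simpa [SyntacticEquiv] using fun x y ↦ accepts_append_cancel_iff σ x y []
  | refl w => exact .refl _ w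
  | symm _ ih => exact ih.symm
  | trans _ _ ih ih' => exact ih.trans ih'
  | append _ _ ih ih' => exact ih.append ih'

theorem accepts_of_mem_dyckLang (hw : w ∈ DyckLang S) : Accepts [] w :=
  (DyckRel.syntacticEquiv hw).mem_iff.2 rfl

theorem Accepts.exists_eq_append_cons {σ : S} {st : List S} {w : List (S ⊕ S)}
    (h : Accepts (σ :: st) w) :
    ∃ v ∈ DyckLang S, ∃ w', w = v ++ Sum.inr σ :: w' ∧ Accepts st w' := by
  match w, h with
  | Sum.inr _ :: w, ⟨rfl, h⟩ => exact ⟨[], nil_mem_dyckLang, w, rfl, h⟩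
  | Sum.inl τ :: w, h =>
    obtain ⟨v₁, hv₁, w₁, rfl, h₁⟩ := exists_eq_append_cons (σ := τ) (st := σ :: st) h
    obtain ⟨v₂, hv₂, w₂, rfl, h₂⟩ := h₁.exists_eq_append_cons
    refine ⟨bracket τ v₁ ++ v₂, append_mem_dyckLang (bracket_mem_dyckLang τ hv₁) hv₂, w₂, ?_, h₂⟩
    simp [bracket]
termination_by w.length

theorem mem_dyckLang_of_accepts {w : List (S ⊕ S)} (h : Accepts [] w) : w ∈ DyckLang S := by
  match w, h with
  | [], _ => exact nil_mem_dyckLang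
  | Sum.inl σ :: w, h =>
    obtain ⟨v, hv, w', rfl, h'⟩ := Accepts.exists_eq_append_cons (σ := σ) (st := []) h
    simpa [bracket] using
      append_mem_dyckLang (bracket_mem_dyckLang σ hv) (mem_dyckLang_of_accepts h')
termination_by w.length

@[elab_as_elim]
theorem dyckLang_induction {motive : ∀ w, w ∈ DyckLang S → Prop}
    (nil : motive [] nil_mem_dyckLang)
    (bracket_append : ∀ σ v w (hv : v ∈ DyckLang S) (hw : w ∈ DyckLang S), motive v hv →
      motive w hw → motive (bracket σ v ++ w) (append_mem_dyckLang (bracket_mem_dyckLang σ hv) hw))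
    {w : List (S ⊕ S)} (hw : w ∈ DyckLang S) : motive w hw := by
  match w, accepts_of_mem_dyckLang hw with
  | [], _ => exact nil
  | Sum.inl σ :: w, h =>
    obtain ⟨v, hv, w', rfl, h'⟩ := Accepts.exists_eq_append_cons (σ := σ) (st := []) h
    have hw' : w' ∈ DyckLang S := mem_dyckLang_of_accepts h'
    have key := bracket_append σ v w' hv hw' (dyckLang_induction nil bracket_append hv)
      (dyckLang_induction nil bracket_append hw')
    simpa [bracket] using key
termination_by w.length

theorem dyckLang_append_cases (h : x ++ y ∈ DyckLang S) :
    (x ∈ DyckLang S ∧ y ∈ DyckLang S) ∨ ∃ p σ q r s,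
      x = p ++ Sum.inl σ :: q ∧ y = r ++ Sum.inr σ :: s ∧
        p ∈ DyckLang S ∧ q ++ r ∈ DyckLang S ∧ s ∈ DyckLang S := by
  generalize hxy : x ++ y = z at h
  induction h using dyckLang_induction generalizing x with
  | nil =>
    obtain ⟨rfl, rfl⟩ := List.append_eq_nil_iff.1 hxy
    exact .inl ⟨nil_mem_dyckLang, nil_mem_dyckLang⟩
  | bracket_append σ v w hv hw _ ih =>
    have hσv := bracket_mem_dyckLang σ hv
    rcases List.append_eq_append_iff.1 hxy with ⟨t, ht, rfl⟩ | ⟨t, rfl, rfl⟩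
    · rcases List.cons_eq_append_iff.1 ht with ⟨rfl, rfl⟩ | ⟨q, rfl, hq⟩
      · exact .inl ⟨nil_mem_dyckLang, append_mem_dyckLang hσv hw⟩
      · rcases List.append_eq_append_iff.1 hq with ⟨r, rfl, hr⟩ | ⟨r, rfl, rfl⟩
        · rcases List.singleton_eq_append_iff.1 hr with ⟨rfl, rfl⟩ | ⟨rfl, rfl⟩
          · exact .inr ⟨[], σ, v, [], w, by simp, rfl, nil_mem_dyckLang, by simpa, hw⟩
          · exact .inl ⟨hσv, hw⟩
        · exact .inr ⟨[], σ, q, r, w, rfl, by simp, nil_mem_dyckLang, hv, hw⟩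
    · rcases ih rfl with ⟨ht, hy⟩ | ⟨p, τ, q, r, s, rfl, rfl, hp, hqr, hs⟩
      · exact .inl ⟨append_mem_dyckLang hσv ht, hy⟩
      · exact .inr ⟨_, τ, q, r, s, (List.append_assoc _ _ _).symm, rfl,
          append_mem_dyckLang hσv hp, hqr, hs⟩

/-- Auxiliary function for `primeFactors`: the first argument is the part of the current factor that
has already been read and the second one is the number of its brackets that are still open. -/
def primeFactorsAux : List (S ⊕ S) → ℕ → List (S ⊕ S) → List (List (S ⊕ S))
  | _, _, [] => []
  | acc, n, Sum.inl σ :: w => primeFactorsAux (acc ++ [Sum.inl σ]) (n + 1) w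
  | acc, n + 2, Sum.inr σ :: w => primeFactorsAux (acc ++ [Sum.inr σ]) (n + 1) w
  | acc, _, Sum.inr σ :: w => (acc ++ [Sum.inr σ]) :: primeFactorsAux [] 0 w

/-- The factorisation of a Dyck word into prime Dyck words, obtained by cutting it wherever all
brackets are closed. Its value on words outside the Dyck language is junk. -/
def primeFactors (w : List (S ⊕ S)) : List (List (S ⊕ S)) := primeFactorsAux [] 0 w

theorem primeFactorsAux_append (hv : v ∈ DyckLang S) (acc : List (S ⊕ S)) (n : ℕ)
    (w : List (S ⊕ S)) :
    primeFactorsAux acc (n + 1) (v ++ w) = primeFactorsAux (acc ++ v) (n + 1) w := by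
  induction hv using dyckLang_induction generalizing acc n w with
  | nil => simp
  | bracket_append σ v v' _ _ ihv ihv' => simp [bracket, primeFactorsAux, ihv, ihv']

@[simp]
theorem primeFactors_nil : primeFactors ([] : List (S ⊕ S)) = [] := by
  simp [primeFactors, primeFactorsAux]

theorem primeFactors_bracket_append (σ : S) (hv : v ∈ DyckLang S) (w : List (S ⊕ S)) :
    primeFactors (bracket σ v ++ w) = bracket σ v :: primeFactors w := by
  simp [primeFactors, primeFactorsAux, bracket, primeFactorsAux_append hv]

theorem primeFactors_append (hu : u ∈ DyckLang S) (v : List (S ⊕ S)) :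
    primeFactors (u ++ v) = primeFactors u ++ primeFactors v := by
  induction hu using dyckLang_induction with
  | nil => simp
  | bracket_append σ u u' hu _ _ ih =>
    simp only [List.append_assoc, primeFactors_bracket_append σ hu, ih, List.cons_append]

theorem primeFactors_flatten {us : List (List (S ⊕ S))} (hus : ∀ u ∈ us, u ∈ DyckLang S) :
    primeFactors us.flatten = us.flatMap primeFactors := by
  induction us with
  | nil => simp
  | cons u us ih =>
    rw [List.forall_mem_cons] at hus
    rw [List.flatten_cons, primeFactors_append hus.1, ih hus.2, List.flatMap_cons]

theorem flatten_primeFactors (hw : w ∈ DyckLang S) : (primeFactors w).flatten = w := by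
  induction hw using dyckLang_induction with
  | nil => simp
  | bracket_append σ v w hv _ _ ih =>
    rw [primeFactors_bracket_append σ hv, List.flatten_cons, ih]

theorem mem_dyckLang_of_mem_primeFactors (hw : w ∈ DyckLang S) :
    ∀ u ∈ primeFactors w, u ∈ DyckLang S := by
  induction hw using dyckLang_induction with
  | nil => simp
  | bracket_append σ v w hv _ _ ih =>
    rw [primeFactors_bracket_append σ hv, List.forall_mem_cons]
    exact ⟨bracket_mem_dyckLang σ hv, ih⟩

/-- The Dyck words all of whose rearrangements of prime factors are in `MDyckLang S P`. This is the
permutation-invariant part of `MDyckLang S P`, and in the end all of it. -/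
def permCore (P : Set (Set S)) : Set (List (S ⊕ S)) :=
  {w | w ∈ DyckLang S ∧
    ∀ l : List (List (S ⊕ S)), l.Perm (primeFactors w) → l.flatten ∈ MDyckLang S P}

theorem nil_mem_permCore : ([] : List (S ⊕ S)) ∈ permCore P := by
  refine ⟨nil_mem_dyckLang, fun l hl ↦ ?_⟩
  rw [primeFactors_nil, List.perm_nil] at hl
  exact hl ▸ MDyckRel.refl []

theorem permCore_subset_mDyckLang : permCore P ⊆ MDyckLang S P := fun _ hw ↦
  flatten_primeFactors hw.1 ▸ hw.2 _ (.refl _)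

theorem flatten_mem_permCore_of_perm {us ws : List (List (S ⊕ S))}
    (hus : ∀ u ∈ us, u ∈ DyckLang S) (h : us.flatten ∈ permCore P) (hws : ws.Perm us) :
    ws.flatten ∈ permCore P := by
  have hws' : ∀ w ∈ ws, w ∈ DyckLang S := fun w hw ↦ hus w (hws.subset hw)
  refine ⟨flatten_mem_dyckLang hws', fun l hl ↦ h.2 l ?_⟩
  rw [primeFactors_flatten hws'] at hl
  rw [primeFactors_flatten hus]
  exact hl.trans (hws.flatMap_right primeFactors)

theorem MDyckRel.flatten {us vs : List (List (S ⊕ S))} (h : List.Forall₂ (MDyckRel S P) us vs) :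
    MDyckRel S P us.flatten vs.flatten := by
  induction h with
  | nil => exact .refl []
  | cons h _ ih => exact h.append ih

theorem mem_permCore_of_forall₂ (hv : v ∈ permCore P) (hu : u ∈ DyckLang S)
    (h : List.Forall₂ (MDyckRel S P) (primeFactors u) (primeFactors v)) : u ∈ permCore P := by
  refine ⟨hu, fun l hl ↦ ?_⟩
  obtain ⟨l', hll', hl'⟩ := List.perm_comp_forall₂ hl h
  exact (MDyckRel.flatten hll').trans (hv.2 l' hl')

theorem exists_eq_append_flatMap_of_perm {α β : Type*} {f : α → β} {l L : List β} {ts : List α}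
    (h : l.Perm (ts.map f ++ L)) :
    ∃ (d : List β) (ks : List (α × List β)), l = d ++ ks.flatMap (fun k ↦ f k.1 :: k.2) ∧
      (ks.map Prod.fst).Perm ts ∧ (d ++ ks.flatMap Prod.snd).Perm L := by
  induction l generalizing ts L with
  | nil =>
    obtain ⟨hts, rfl⟩ := List.append_eq_nil_iff.1 (List.nil_perm.1 h)
    obtain rfl := List.map_eq_nil_iff.1 hts
    exact ⟨[], [], by simp⟩
  | cons a l ih =>
    rcases List.mem_append.1 (h.subset List.mem_cons_self) with ha | ha
    · obtain ⟨t, ht, rfl⟩ := List.mem_map.1 ha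
      obtain ⟨ts₁, ts₂, rfl⟩ := List.append_of_mem ht
      obtain ⟨d, ks, rfl, hks, hL⟩ := ih (L := L) (ts := ts₁ ++ ts₂) <|
        List.Perm.cons_inv (h.trans (by simp))
      exact ⟨[], (t, d) :: ks, by simp, (hks.cons t).trans List.perm_middle.symm,
        by simpa using hL⟩
    · obtain ⟨L₁, L₂, rfl⟩ := List.append_of_mem ha
      obtain ⟨d, ks, rfl, hks, hL⟩ := ih (L := L₁ ++ L₂) (ts := ts) <|
        List.Perm.cons_inv (h.trans (by simpa using List.perm_middle (l₁ := ts.map f ++ L₁)))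
      exact ⟨a :: d, ks, by simp, hks, (hL.cons a).trans List.perm_middle.symm⟩

/-- The brackets `σ₁v₁σ̄₁, …, σ_ℓv_ℓσ̄_ℓ` that an instance of the cancellation rule may remove,
given as the list `ts` of the pairs `(σᵢ, vᵢ)`. The premise `v₁⋯v_ℓ ≡ ε` is strengthened to
membership in `permCore P`, which makes the notion invariant under permutations of `ts`. -/
structure IsCancellable (P : Set (Set S)) (ts : List (S × List (S ⊕ S))) : Prop where
  nodup : (ts.map Prod.fst).Nodup
  setOf_mem : {σ | σ ∈ ts.map Prod.fst} ∈ P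
  dyck : ∀ t ∈ ts, t.2 ∈ DyckLang S
  flatten_mem : (ts.map Prod.snd).flatten ∈ permCore P

namespace IsCancellable

variable {ts ts' : List (S × List (S ⊕ S))}

theorem perm (h : IsCancellable P ts) (hts : ts'.Perm ts) : IsCancellable P ts' where
  nodup := (hts.map Prod.fst).nodup_iff.2 h.nodup
  setOf_mem := by simpa only [(hts.map Prod.fst).mem_iff] using h.setOf_mem
  dyck t ht := h.dyck t (hts.subset ht)
  flatten_mem := flatten_mem_permCore_of_perm (List.forall_mem_map.2 h.dyck) h.flatten_mem
    (hts.map Prod.snd)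

theorem mDyckRel {d : List (List (S ⊕ S))} {ks : List ((S × List (S ⊕ S)) × List (List (S ⊕ S)))}
    (h : IsCancellable P (ks.map Prod.fst))
    (hdyck : ∀ w ∈ d ++ ks.flatMap Prod.snd, w ∈ DyckLang S) :
    MDyckRel S P (d ++ ks.flatMap (fun k ↦ bracket k.1.1 k.1.2 :: k.2)).flatten
      (d ++ ks.flatMap Prod.snd).flatten := by
  rw [List.forall_mem_append] at hdyck
  have hks : ∀ k ∈ ks, k.2.flatten ∈ DyckLang S := fun k hk ↦
    flatten_mem_dyckLang fun w hw ↦ hdyck.2 w (List.mem_flatMap.2 ⟨k, hk, hw⟩)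
  have key := MDyckRel.cancel (P := P) d.flatten (ks.map fun k ↦ (k.1.1, k.1.2, k.2.flatten))
    (by simpa [Function.comp_def] using h.nodup) (by simpa [Function.comp_def] using h.setOf_mem)
    (flatten_mem_dyckLang hdyck.1)
    (List.forall_mem_map.2 fun k hk ↦ ⟨h.dyck _ (List.mem_map_of_mem hk), hks k hk⟩)
    (by simpa [Function.comp_def, MDyckLang] using permCore_subset_mDyckLang h.flatten_mem)
  simpa [bracket, List.flatMap, List.flatten_flatten, Function.comp_def] using key

theorem exists_perm_mDyckRel (h : IsCancellable P ts) {l L : List (List (S ⊕ S))}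
    (hL : ∀ w ∈ L, w ∈ DyckLang S) (hl : l.Perm (ts.map (Function.uncurry bracket) ++ L)) :
    ∃ l' : List (List (S ⊕ S)), l'.Perm L ∧ MDyckRel S P l.flatten l'.flatten := by
  obtain ⟨d, ks, rfl, hks, hdks⟩ := exists_eq_append_flatMap_of_perm hl
  exact ⟨_, hdks, (h.perm hks).mDyckRel fun w hw ↦ hL w (hdks.subset hw)⟩

theorem mem_permCore_iff (h : IsCancellable P ts) (hu : u ∈ DyckLang S) (hv : v ∈ DyckLang S)
    (huv : (primeFactors u).Perm (ts.map (Function.uncurry bracket) ++ primeFactors v)) :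
    u ∈ permCore P ↔ v ∈ permCore P := by
  constructor
  · -- The brackets put in front of a rearrangement for `v` give one for `u`, and they cancel.
    refine fun hu' ↦ ⟨hv, fun l hl ↦ ?_⟩
    obtain ⟨l', hl', hrel⟩ := h.exists_perm_mDyckRel (L := []) (by simp) (.refl _)
    rw [List.append_nil, List.perm_nil.1 hl'] at hrel
    have hmem := hu'.2 _ ((hl.append_left _).trans huv.symm)
    rw [List.flatten_append] at hmem
    exact (hrel.append (.refl l.flatten)).symm.trans hmem
  · refine fun hv' ↦ ⟨hu, fun l hl ↦ ?_⟩
    obtain ⟨l', hl', hrel⟩ :=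
      h.exists_perm_mDyckRel (mem_dyckLang_of_mem_primeFactors hv) (hl.trans huv)
    exact hrel.trans (hv'.2 l' hl')

end IsCancellable

theorem append_bracket_append_mem_permCore (σ : S) {p s : List (S ⊕ S)} (hp : p ∈ DyckLang S)
    (hs : s ∈ DyckLang S) (hu : u ∈ DyckLang S) (hv : v ∈ DyckLang S) (huv : MDyckRel S P u v)
    (h : p ++ (bracket σ v ++ s) ∈ permCore P) : p ++ (bracket σ u ++ s) ∈ permCore P := by
  refine mem_permCore_of_forall₂ h
    (append_mem_dyckLang hp (append_mem_dyckLang (bracket_mem_dyckLang σ hu) hs)) ?_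
  simp only [primeFactors_append hp, primeFactors_bracket_append σ hu,
    primeFactors_bracket_append σ hv]
  have hrefl (l : List (List (S ⊕ S))) : List.Forall₂ (MDyckRel S P) l l :=
    List.forall₂_same.2 fun w _ ↦ .refl w
  refine List.rel_append (hrefl _) (.cons ?_ (hrefl _))
  exact ((MDyckRel.refl [Sum.inl σ]).append huv).append (.refl [Sum.inr σ])

theorem syntacticEquiv_permCore_of_dyckLang (hu : u ∈ DyckLang S) (hv : v ∈ DyckLang S)
    (huv : MDyckRel S P u v)
    (h : ∀ x ∈ DyckLang S, ∀ y ∈ DyckLang S, x ++ u ++ y ∈ permCore P ↔ x ++ v ++ y ∈ permCore P) :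
    SyntacticEquiv (permCore P) u v := by
  intro x y
  by_cases hxy : x ++ y ∈ DyckLang S
  · rcases dyckLang_append_cases hxy with ⟨hx, hy⟩ | ⟨p, σ, q, r, s, rfl, rfl, hp, hqr, hs⟩
    · exact h x hx y hy
    · have hqur := (append_append_mem_dyckLang_iff hu q r).2 hqr
      have hqvr := (append_append_mem_dyckLang_iff hv q r).2 hqr
      have hrel := ((MDyckRel.refl q).append huv).append (MDyckRel.refl r)
      have key : p ++ (bracket σ (q ++ u ++ r) ++ s) ∈ permCore P ↔
          p ++ (bracket σ (q ++ v ++ r) ++ s) ∈ permCore P :=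
        ⟨append_bracket_append_mem_permCore σ hp hs hqvr hqur hrel.symm,
          append_bracket_append_mem_permCore σ hp hs hqur hqvr hrel⟩
      simpa [bracket] using key
  · exact iff_of_false (fun h ↦ hxy ((append_append_mem_dyckLang_iff hu x y).1 h.1))
      (fun h ↦ hxy ((append_append_mem_dyckLang_iff hv x y).1 h.1))

theorem IsCancellable.syntacticEquiv_permCore {ts : List (S × List (S ⊕ S))}
    (h : IsCancellable P ts) (hu : u ∈ DyckLang S) (hv : v ∈ DyckLang S) (huv : MDyckRel S P u v)
    (hperm : (primeFactors u).Perm (ts.map (Function.uncurry bracket) ++ primeFactors v)) :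
    SyntacticEquiv (permCore P) u v := by
  refine syntacticEquiv_permCore_of_dyckLang hu hv huv fun x hx y hy ↦ h.mem_permCore_iff
    (append_mem_dyckLang (append_mem_dyckLang hx hu) hy)
    (append_mem_dyckLang (append_mem_dyckLang hx hv) hy) ?_
  simp only [List.append_assoc, primeFactors_append hx, primeFactors_append hu,
    primeFactors_append hv]
  refine List.Perm.trans ?_ (List.perm_append_comm_assoc _ _ _)
  simpa only [List.append_assoc] using (hperm.append_right _).append_left (primeFactors x)

theorem primeFactors_append_flatten_bracket_append_perm
    {ts : List (S × List (S ⊕ S) × List (S ⊕ S))} (hu : u ∈ DyckLang S)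
    (hts : ∀ t ∈ ts, t.2.1 ∈ DyckLang S ∧ t.2.2 ∈ DyckLang S) :
    (primeFactors (u ++ (ts.map fun t ↦ bracket t.1 t.2.1 ++ t.2.2).flatten)).Perm
      ((ts.map fun t ↦ bracket t.1 t.2.1) ++
        primeFactors (u ++ (ts.map fun t ↦ t.2.2).flatten)) := by
  have hdyck : ∀ t ∈ ts, bracket t.1 t.2.1 ++ t.2.2 ∈ DyckLang S := fun t ht ↦
    append_mem_dyckLang (bracket_mem_dyckLang t.1 (hts t ht).1) (hts t ht).2
  have hpf : (ts.map fun t ↦ bracket t.1 t.2.1 ++ t.2.2).flatMap primeFactors =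
      ts.flatMap fun t ↦ bracket t.1 t.2.1 :: primeFactors t.2.2 := by
    rw [List.flatMap_map]
    exact List.flatMap_congr fun t ht ↦ primeFactors_bracket_append t.1 (hts t ht).1 t.2.2
  rw [primeFactors_append hu, primeFactors_append hu,
    primeFactors_flatten (List.forall_mem_map.2 hdyck),
    primeFactors_flatten (List.forall_mem_map.2 fun t ht ↦ (hts t ht).2), hpf, List.flatMap_map]
  exact ((List.map_append_flatMap_perm ts _ _).symm.append_left _).trans
    (List.perm_append_comm_assoc _ _ _)

theorem MDyckRel.syntacticEquiv (h : MDyckRel S P u v) : SyntacticEquiv (permCore P) u v := by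
  induction h with
  | refl w => exact .refl _ w
  | symm _ ih => exact ih.symm
  | trans _ _ ih ih' => exact ih.trans ih'
  | append _ _ ih ih' => exact ih.append ih'
  | cancel u₀ ts nodup mem hu₀ hts hv ih =>
    have hcancel : IsCancellable P (ts.map fun t ↦ (t.1, t.2.1)) :=
      { nodup := by simpa [Function.comp_def] using nodup
        setOf_mem := by simpa [Function.comp_def] using mem
        dyck := List.forall_mem_map.2 fun t ht ↦ (hts t ht).1
        flatten_mem := by simpa [Function.comp_def] using ih.mem_iff.2 nil_mem_permCore }
    refine hcancel.syntacticEquiv_permCore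
      (append_mem_dyckLang hu₀ <| flatten_mem_dyckLang <| List.forall_mem_map.2 fun t ht ↦
        append_mem_dyckLang (bracket_mem_dyckLang t.1 (hts t ht).1) (hts t ht).2)
      (append_mem_dyckLang hu₀ <| flatten_mem_dyckLang <| List.forall_mem_map.2 fun t ht ↦
        (hts t ht).2)
      (.cancel u₀ ts nodup mem hu₀ hts hv) ?_
    rw [List.map_map]
    exact primeFactors_append_flatten_bracket_append_perm hu₀ hts

theorem mDyckLang_subset_permCore : MDyckLang S P ⊆ permCore P := fun _ hw ↦
  (MDyckRel.syntacticEquiv hw).mem_iff.2 nil_mem_permCore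

theorem mDyck_permutation_general (P : Set (Set S)) {us ws : List (List (S ⊕ S))}
    (hus : ∀ u ∈ us, u ∈ DyckLang S) (hu : us.flatten ∈ MDyckLang S P) (hws : ws.Perm us) :
    ws.flatten ∈ MDyckLang S P :=
  permCore_subset_mDyckLang (flatten_mem_permCore_of_perm hus (mDyckLang_subset_permCore hu) hws)

end CS

/-- Let `𝔓` be a partition of `Σ`, `u₁, …, u_k ∈ D(Σ)` and
`v₁, …, v_ℓ ∈ D(Σ)`.  If `u₁⋯u_k ∈ mD_c(Σ,𝔓)` and `v₁⋯v_ℓ ∈ mD_c(Σ,𝔓)`, then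
the concatenation of every permutation of `u₁, …, u_k, v₁, …, v_ℓ` is in
`mD_c(Σ,𝔓)`. -/
theorem CS.mDyck_permutation (S : Type) (Pa : Set (Set S))
    (hPa : Setoid.IsPartition Pa) (us vs : List (List (S ⊕ S)))
    (hus : ∀ u ∈ us, u ∈ CS.DyckLang S) (hvs : ∀ v ∈ vs, v ∈ CS.DyckLang S)
    (hu : us.flatten ∈ CS.MDyckLang S Pa) (hv : vs.flatten ∈ CS.MDyckLang S Pa) :
    ∀ ws : List (List (S ⊕ S)), ws.Perm (us ++ vs) →
      ws.flatten ∈ CS.MDyckLang S Pa := by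
  intro ws hws
  exact CS.mDyck_permutation_general Pa (List.forall_mem_append.2 ⟨hus, hvs⟩)
    (List.flatten_append ▸ CS.MDyckRel.append hu hv) hws
end

section
/- For every partition 𝔓 of Σ, every member of the congruence multiple Dyck language is a Dyck word: mD_c(Σ,𝔓) ⊆ D(Σ). -/
/-! The cancellation rule of `≡_{Σ,𝔓}` already holds in `≡_Σ`: since each `vᵢ` is a Dyck word, each
block `σᵢ vᵢ σ̄ᵢ` cancels on its own. -/

namespace CS

variable {S : Type}

namespace DyckRel

theorem bracket {v : List (S ⊕ S)} (hv : DyckRel S v []) (σ : S) :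
    DyckRel S (Sum.inl σ :: v ++ [Sum.inr σ]) [] :=
  (((refl [Sum.inl σ]).append hv).append (refl [Sum.inr σ])).trans (cancel σ)

theorem flatten_map {ι : Type*} {f g : ι → List (S ⊕ S)} {l : List ι}
    (h : ∀ i ∈ l, DyckRel S (f i) (g i)) :
    DyckRel S (l.map f).flatten (l.map g).flatten := by
  induction l with
  | nil => exact refl []
  | cons i l ih =>
    rw [List.forall_mem_cons] at h
    exact h.1.append (ih h.2)

end DyckRel

theorem MDyckRel.dyckRel {P : Set (Set S)} {u v : List (S ⊕ S)} (h : MDyckRel S P u v) :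
    DyckRel S u v := by
  induction h with
  | refl w => exact .refl w
  | symm _ ih => exact ih.symm
  | trans _ _ ihuv ihvw => exact ihuv.trans ihvw
  | append _ _ ih ih' => exact ih.append ih'
  | cancel u₀ ts _ _ _ hts _ _ =>
    have block_cancels : ∀ t ∈ ts,
        DyckRel S (Sum.inl t.1 :: t.2.1 ++ [Sum.inr t.1] ++ t.2.2) t.2.2 := fun t ht =>
      (DyckRel.bracket (hts t ht).1 t.1).append (.refl t.2.2)
    exact (DyckRel.refl u₀).append (DyckRel.flatten_map block_cancels)

end CS

theorem CS.mDyck_subset_Dyck_general (S : Type) (P : Set (Set S)) :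
    CS.MDyckLang S P ⊆ CS.DyckLang S :=
  fun _ hw => CS.MDyckRel.dyckRel hw

/-- For every partition `𝔓` of `Σ`, every member of the
congruence multiple Dyck language is a Dyck word: `mD_c(Σ,𝔓) ⊆ D(Σ)`. -/
theorem CS.mDyck_subset_Dyck (S : Type) (Pa : Set (Set S))
    (hPa : Setoid.IsPartition Pa) :
    CS.MDyckLang S Pa ⊆ CS.DyckLang S :=
  CS.mDyck_subset_Dyck_general S Pa
end
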